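/- Fix ε ∈ {+1,−1} and define R^{εε}(u) := Σ_{k=0}^{⌊r/2⌋} ( Π_{m=1}^{k} (u−(2m−1))/(u+(2m−1)) )·p_{εε}·P_{r−2k} ∈ Cl ⊗ Cl. Let ι_{12}, ι_{23}, ι_{13} : Cl ⊗ Cl → Cl ⊗ Cl ⊗ Cl be the ℂ-algebra homomorphisms determined by ι_{12}(a⊗b) = a⊗b⊗1, ι_{23}(a⊗b) = 1⊗a⊗b, ι_{13}(a⊗b) = a⊗1⊗b. Then R^{εε}(u) is an so_{2r}-invariant solution of the Yang–Baxter equation: for all u, v ∈ ℂ such that none of u, v, u+v equals −(2m−1) for any m = 1,...,⌊r/2⌋, one has ι_{12}(R^{εε}(u))·ι_{13}(R^{εε}(u+v))·ι_{23}(R^{εε}(v)) = ι_{23}(R^{εε}(v))·ι_{13}(R^{εε}(u+v))·ι_{12}(R^{εε}(u)) in Cl ⊗ Cl ⊗ Cl. -/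

import Mathlib

open scoped TensorProduct

noncomputable section

/-- The quadratic form `x₁² + ⋯ + x_{2r}²` on `ℂ^{2r}`. -/
def Qf (r : ℕ) : QuadraticForm ℂ (Fin (2*r) → ℂ) :=
  QuadraticMap.weightedSumSquares ℂ (fun _ : Fin (2*r) => (1:ℂ))

/-- The Clifford algebra of `Qf r`. -/
abbrev Cl (r : ℕ) := CliffordAlgebra (Qf r)

/-- The generators `Γ_i`. -/
def Γgen (r : ℕ) (i : Fin (2*r)) : Cl r :=
  CliffordAlgebra.ι (Qf r) (Pi.single i 1)

/-- The antisymmetrised products `Γ_{[i₁…i_k]}`. -/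
def Γbr (r k : ℕ) (i : Fin k → Fin (2*r)) : Cl r :=
  ((k.factorial : ℂ))⁻¹ •
    ∑ σ : Equiv.Perm (Fin k),
      ((Equiv.Perm.sign σ : ℤ) : ℂ) • (List.ofFn fun j => Γgen r (i (σ j))).prod

/-- The invariants `I_k ∈ Cl ⊗ Cl`. -/
def Ik (r k : ℕ) : Cl r ⊗[ℂ] Cl r :=
  ∑ i : Fin k → Fin (2*r), (Γbr r k i) ⊗ₜ[ℂ] (Γbr r k i)

/-- The split Casimir element `Ĉ = −I₂/(16(2r−2))`. -/
def sC (r : ℕ) : Cl r ⊗[ℂ] Cl r := (-(16*(2*(r:ℂ)-2))⁻¹) • Ik r 2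

/-- The top element `Γ_{2r+1} = (−i)^r Γ₁⋯Γ_{2r}`. -/
def Γtop (r : ℕ) : Cl r :=
  ((-Complex.I)^r) • (List.ofFn fun i : Fin (2*r) => Γgen r i).prod

/-- The chirality projector `p_ε = (1 + ε Γ_{2r+1})/2`. -/
def pCh (r : ℕ) (ε : ℂ) : Cl r := (2:ℂ)⁻¹ • (1 + ε • Γtop r)

/-- The chirality projectors `p_{εε'} = p_ε ⊗ p_{ε'}`. -/
def ppCh (r : ℕ) (ε ε' : ℂ) : Cl r ⊗[ℂ] Cl r := (pCh r ε) ⊗ₜ[ℂ] (pCh r ε')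

/-- The eigenvalues `c_k = (2k(2r−k) − r(2r−1))/(16(r−1))`. -/
def cEv (r k : ℕ) : ℂ :=
  (2*(k:ℂ)*(2*(r:ℂ)-(k:ℂ)) - (r:ℂ)*(2*(r:ℂ)-1)) / (16*((r:ℂ)-1))

/-- The spectral projectors `P_k = Π_{j≠k} (Ĉ − c_j)/(c_k − c_j)`. -/
def Pk (r k : ℕ) : Cl r ⊗[ℂ] Cl r :=
  (((List.range (r+1)).filter (fun j => j ≠ k)).map
    (fun j => (cEv r k - cEv r j)⁻¹ • (sC r - cEv r j • 1))).prod

/-- `P_r^S = (p_{++} + p_{−−})·P_r`. -/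
def PrS (r : ℕ) : Cl r ⊗[ℂ] Cl r := (ppCh r 1 1 + ppCh r (-1) (-1)) * Pk r r

/-- The ascending factorial `a_k(u) = (u/2)(u/2+1)⋯(u/2+k−1)`. -/
def asc (u : ℂ) (k : ℕ) : ℂ := ∏ j ∈ Finset.range k, (u/2 + (j:ℂ))

/-- The R-matrix `R^{εε}(u) = Σ_{k=0}^{⌊r/2⌋} (Π_{m=1}^{k} (u−(2m−1))/(u+(2m−1)))·p_{εε}·P_{r−2k}`. -/
def Rmat (r : ℕ) (ε : ℂ) (u : ℂ) : Cl r ⊗[ℂ] Cl r :=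
  ∑ k ∈ Finset.range (r/2+1),
    (∏ m ∈ Finset.range k, (u - (2*(m:ℂ)+1))/(u + (2*(m:ℂ)+1))) •
      (ppCh r ε ε * Pk r (r-2*k))

section Quadrature

open MvPolynomial

theorem exists_quadrature (n : ℕ) (g : ℕ → ℂ) :
    ∃ ω : Fin (n + 1) → ℂ, ∀ a ≤ n, ∑ i, ω i * (i : ℂ) ^ a = g a := by
  have hinj : Function.Injective (fun i : Fin (n + 1) => ((i : ℕ) : ℂ)) := fun i j h => by
    simpa [Fin.ext_iff] using h
  have hdet := Matrix.det_vandermonde_ne_zero_iff.2 hinj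
  set M := Matrix.vandermonde fun i : Fin (n + 1) => ((i : ℕ) : ℂ) with hM
  refine ⟨Matrix.vecMul (fun a : Fin (n + 1) => g a) M⁻¹, fun a ha => ?_⟩
  have h : Matrix.vecMul (Matrix.vecMul (fun a : Fin (n + 1) => g a) M⁻¹) M
      = fun a : Fin (n + 1) => g a := by
    rw [Matrix.vecMul_vecMul, Matrix.nonsing_inv_mul _ (isUnit_iff_ne_zero.2 hdet),
      Matrix.vecMul_one]
  have := congrFun h ⟨a, by omega⟩
  simpa [Matrix.vecMul, dotProduct, hM, Matrix.vandermonde_apply] using this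

/-- Homogeneous coordinates `(z_m, w_m)`, `m = 0, 1, 2`, standing for `e^{± iθ_m / 2}`. -/
abbrev TrigPoly := MvPolynomial (Fin 3 ⊕ Fin 3) ℂ

/-- The multidegree: `z_m` and `w_m` both have degree one in the `m`-th pair. -/
def trigWeight : Fin 3 ⊕ Fin 3 → (Fin 3 → ℕ) :=
  Sum.elim (fun m => Pi.single m 1) (fun m => Pi.single m 1)

/-- The quadrature nodes `(z_m, w_m) = (t_m, 1)`. -/
def node {n : ℕ} (t : Fin 3 → Fin (n + 1)) : Fin 3 ⊕ Fin 3 → ℂ :=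
  Sum.elim (fun m => ((t m : ℕ) : ℂ)) 1

/-- The product quadrature functional with weights `ω`. -/
def quad {n : ℕ} (ω : Fin 3 → Fin (n + 1) → ℂ) : TrigPoly →ₗ[ℂ] ℂ :=
  ∑ t : Fin 3 → Fin (n + 1), (∏ m, ω m (t m)) • (aeval (node t)).toLinearMap

theorem quad_apply {n : ℕ} (ω : Fin 3 → Fin (n + 1) → ℂ) (p : TrigPoly) :
    quad ω p = ∑ t : Fin 3 → Fin (n + 1), (∏ m, ω m (t m)) * aeval (node t) p := by
  simp [quad]

theorem quad_of_eval_eq_prod {n : ℕ} (ω : Fin 3 → Fin (n + 1) → ℂ) {p : TrigPoly}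
    (f : Fin 3 → Fin (n + 1) → ℂ) (hf : ∀ t, aeval (node t) p = ∏ m, f m (t m)) :
    quad ω p = ∏ m, ∑ i, ω m i * f m i := by
  rw [quad_apply, Finset.prod_univ_sum]
  simp [hf, Finset.prod_mul_distrib]

theorem aeval_node_monomial {n : ℕ} (t : Fin 3 → Fin (n + 1)) (s : Fin 3 ⊕ Fin 3 →₀ ℕ) :
    aeval (node t) (monomial s (1 : ℂ)) = ∏ m, ((t m : ℕ) : ℂ) ^ s (Sum.inl m) := by
  rw [aeval_monomial, Finsupp.prod_fintype _ _ (by simp)]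
  simp [node]

theorem weight_trigWeight (s : Fin 3 ⊕ Fin 3 →₀ ℕ) (m : Fin 3) :
    Finsupp.weight trigWeight s m = s (Sum.inl m) + s (Sum.inr m) := by
  rw [Finsupp.weight_apply, Finsupp.sum_fintype _ _ (by simp)]
  simp [trigWeight, Finset.sum_apply, Pi.single_apply]

theorem mkDerivation_diag_monomial {σ : Type*} [Fintype σ] (q : σ → MvPolynomial σ ℂ)
    (s : σ →₀ ℕ) :
    mkDerivation ℂ (fun i => q i * X i) (monomial s (1 : ℂ))
      = (∑ i, (s i : MvPolynomial σ ℂ) * q i) * monomial s 1 := by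
  classical
  rw [mkDerivation_monomial, one_smul, Finsupp.sum_fintype _ _ (by simp), Finset.sum_mul]
  refine Finset.sum_congr rfl fun i _ => ?_
  rcases Nat.eq_zero_or_pos (s i) with h | h
  · simp [h]
  · have hs : s - Finsupp.single i 1 + Finsupp.single i 1 = s :=
      tsub_add_cancel_of_le (Finsupp.single_le_iff.2 h)
    have : monomial s (1 : ℂ) = monomial (s - Finsupp.single i 1) 1 * X i := by
      rw [X, monomial_mul, hs, one_mul]
    rw [this, show (monomial (s - Finsupp.single i 1)) ((s i : ℕ) : ℂ)
        = (s i : MvPolynomial σ ℂ) * monomial (s - Finsupp.single i 1) 1 by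
      rw [← map_natCast (C (σ := σ) (R := ℂ)), C_mul_monomial, mul_one], smul_eq_mul]
    ring

/-- `cos θ_m`. -/
def trigCo (m : Fin 3) : TrigPoly := C (1 / 2) * (X (Sum.inl m) ^ 2 + X (Sum.inr m) ^ 2)

/-- `i sin θ_m`. -/
def trigSi (m : Fin 3) : TrigPoly := C (1 / 2) * (X (Sum.inl m) ^ 2 - X (Sum.inr m) ^ 2)

/-- Coefficients of the logarithmic vector field `trigField` along the three angles. -/
def trigFieldCoeff : Fin 3 → TrigPoly :=
  ![trigCo 0 * trigSi 1 * trigSi 2, -(trigSi 0 * trigCo 1 * trigSi 2),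
    trigSi 0 * trigSi 1 * trigCo 2]

/-- The divergence-free vector field tangent to the common level sets of the two diagonal
entries `rotDiag 1` and `rotDiag 3`. -/
def trigField : Derivation ℂ TrigPoly TrigPoly :=
  mkDerivation ℂ fun v => Sum.elim trigFieldCoeff (fun m => -trigFieldCoeff m) v * X v

theorem quad_trigField_monomial {n : ℕ} (ω : Fin 3 → Fin (n + 1) → ℂ) (g : Fin 3 → ℕ → ℂ)
    (hg : ∀ m, ∀ a ≤ n, ∑ i, ω m i * (i : ℂ) ^ a = g m a) (u : Fin 3 → ℂ)
    (hu : u 0 + u 2 = u 1)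
    (hrec : ∀ m a b, a + b + 2 = n →
      ((a : ℂ) - b + 2 * u m) * g m (a + 2) + ((a : ℂ) - b - 2 * u m) * g m a = 0)
    (s : Fin 3 ⊕ Fin 3 →₀ ℕ) (hs : ∀ m, s (Sum.inl m) + s (Sum.inr m) + 2 = n) :
    quad ω (trigField (monomial s 1)) = 0 := by
  set k : Fin 3 → ℂ := fun m => (s (Sum.inl m) : ℂ) - s (Sum.inr m) with hk
  set co : Fin 3 → Fin (n + 1) → ℂ := fun m i =>
    (((i : ℕ) : ℂ) ^ 2 + 1) / 2 * ((i : ℕ) : ℂ) ^ s (Sum.inl m) with hco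
  set si : Fin 3 → Fin (n + 1) → ℂ := fun m i =>
    (((i : ℕ) : ℂ) ^ 2 - 1) / 2 * ((i : ℕ) : ℂ) ^ s (Sum.inl m) with hsi
  have ibp : ∀ m, ∑ i, ω m i * (k m * co m i + 2 * u m * si m i) = 0 := by
    intro m
    have h1 := hg m (s (Sum.inl m) + 2) (by have := hs m; omega)
    have h2 := hg m (s (Sum.inl m)) (by have := hs m; omega)
    have h3 := hrec m _ _ (hs m)
    rw [← h1, ← h2, Finset.mul_sum, Finset.mul_sum, ← Finset.sum_add_distrib] at h3
    rw [← mul_zero (1 / 2 : ℂ), ← h3, Finset.mul_sum]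
    refine Finset.sum_congr rfl fun i _ => ?_
    simp only [hk, hco, hsi]
    ring
  have key : ∀ t, aeval (node t) (trigField (monomial s 1))
      = (k 0 * co 0 (t 0) + 2 * u 0 * si 0 (t 0)) * si 1 (t 1) * si 2 (t 2)
        - si 0 (t 0) * (k 1 * co 1 (t 1) + 2 * u 1 * si 1 (t 1)) * si 2 (t 2)
        + si 0 (t 0) * si 1 (t 1) * (k 2 * co 2 (t 2) + 2 * u 2 * si 2 (t 2)) := by
    intro t
    rw [trigField, mkDerivation_diag_monomial, map_mul, aeval_node_monomial]
    simp only [Fintype.sum_sum_type, Fin.sum_univ_three, Fin.prod_univ_three, Sum.elim_inl,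
      Sum.elim_inr, trigFieldCoeff, trigCo, trigSi, Matrix.cons_val, map_add, map_mul, map_neg,
      map_sub, map_natCast, map_pow, aeval_X, algHom_C, node, Pi.one_apply, hk, hco, hsi,
      Algebra.algebraMap_self, RingHom.id_apply, ← hu]
    ring
  have split : ∀ f : Fin 3 → Fin (n + 1) → ℂ,
      ∑ t : Fin 3 → Fin (n + 1), (∏ m, ω m (t m)) * (f 0 (t 0) * f 1 (t 1) * f 2 (t 2))
        = (∑ i, ω 0 i * f 0 i) * (∑ i, ω 1 i * f 1 i) * (∑ i, ω 2 i * f 2 i) := by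
    intro f
    rw [← Fin.prod_univ_three (fun m => ∑ i, ω m i * f m i), Finset.prod_univ_sum]
    simp [Fin.prod_univ_three, mul_mul_mul_comm]
  set D : Fin 3 → Fin (n + 1) → ℂ := fun m i => k m * co m i + 2 * u m * si m i with hD
  have s0 := split ![D 0, si 1, si 2]
  have s1 := split ![si 0, D 1, si 2]
  have s2 := split ![si 0, si 1, D 2]
  simp only [Matrix.cons_val, ibp, zero_mul, mul_zero, hD] at s0 s1 s2
  rw [quad_apply]
  simp only [key, mul_add, mul_sub, Finset.sum_add_distrib, Finset.sum_sub_distrib] at s0 s1 s2 ⊢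
  rw [s0, s1, s2]
  ring

theorem quad_trigField {n : ℕ} (ω : Fin 3 → Fin (n + 1) → ℂ) (g : Fin 3 → ℕ → ℂ)
    (hg : ∀ m, ∀ a ≤ n, ∑ i, ω m i * (i : ℂ) ^ a = g m a) (u : Fin 3 → ℂ)
    (hu : u 0 + u 2 = u 1)
    (hrec : ∀ m a b, a + b + 2 = n →
      ((a : ℂ) - b + 2 * u m) * g m (a + 2) + ((a : ℂ) - b - 2 * u m) * g m a = 0)
    {h : TrigPoly} {d : ℕ} (hd : d + 2 = n)
    (hh : IsWeightedHomogeneous trigWeight h (fun _ => d)) :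
    quad ω (trigField h) = 0 := by
  rw [h.as_sum, map_sum, map_sum]
  refine Finset.sum_eq_zero fun s hs => ?_
  have hw := hh (mem_support_iff.1 hs)
  rw [show monomial s (h.coeff s) = h.coeff s • monomial s (1 : ℂ) by
    rw [smul_monomial, smul_eq_mul, mul_one], Derivation.map_smul, map_smul,
    quad_trigField_monomial ω g hg u hu hrec s fun m => ?_, smul_zero]
  rw [← weight_trigWeight, hw, hd]

theorem quad_rename_swap {n : ℕ} (ω : Fin 3 → Fin (n + 1) → ℂ) (g : Fin 3 → ℕ → ℂ)
    (hg : ∀ m, ∀ a ≤ n, ∑ i, ω m i * (i : ℂ) ^ a = g m a)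
    (hsymm : ∀ m a b, a + b = n → g m a = g m b) (m : Fin 3)
    {h : TrigPoly} (hh : IsWeightedHomogeneous trigWeight h (fun _ => n)) :
    quad ω (rename (Equiv.swap (Sum.inl m) (Sum.inr m)) h) = quad ω h := by
  rw [h.as_sum, map_sum, map_sum, map_sum]
  refine Finset.sum_congr rfl fun s hs => ?_
  have hw := hh (mem_support_iff.1 hs)
  have hs' : ∀ k, s (Sum.inl k) + s (Sum.inr k) = n := fun k => by
    rw [← weight_trigWeight, hw]
  rw [show monomial s (h.coeff s) = h.coeff s • monomial s (1 : ℂ) by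
    rw [smul_monomial, smul_eq_mul, mul_one], map_smul, map_smul, map_smul, rename_monomial]
  congr 1
  have eval_monomial : ∀ s : Fin 3 ⊕ Fin 3 →₀ ℕ, quad ω (monomial s 1)
      = ∏ m, ∑ i, ω m i * ((i : ℕ) : ℂ) ^ s (Sum.inl m) := fun s =>
    quad_of_eval_eq_prod ω (fun m i => ((i : ℕ) : ℂ) ^ s (Sum.inl m))
      fun t => aeval_node_monomial t s
  rw [eval_monomial, eval_monomial]
  refine Finset.prod_congr rfl fun k _ => ?_
  have e : ∀ v, Finsupp.mapDomain (Equiv.swap (Sum.inl m) (Sum.inr m)) s v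
      = s (Equiv.swap (Sum.inl m) (Sum.inr m) v) := fun v => by
    conv_lhs => rw [← Equiv.swap_apply_self (Sum.inl m) (Sum.inr m) v]
    exact Finsupp.mapDomain_apply (Equiv.injective _) _ _
  rw [e]
  by_cases hk : k = m
  · subst hk
    have := hs' k
    rw [Equiv.swap_apply_left, hg _ _ (by omega), hg _ _ (by omega), hsymm k _ _ (hs' k)]
  · rw [Equiv.swap_apply_of_ne_of_ne (by simpa using hk) (by simp)]

/-- `cos (θ_m / 2)`. -/
def trigC (m : Fin 3) : TrigPoly := C (1 / 2) * (X (Sum.inl m) + X (Sum.inr m))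

/-- `i sin (θ_m / 2)`. -/
def trigS (m : Fin 3) : TrigPoly := C (1 / 2) * (X (Sum.inl m) - X (Sum.inr m))

/-- Components, in the basis of Pauli matrices, of the product of three rotations about the
coordinate axes, with `j = √-1` for one order of the factors and `j = -√-1` for the other. -/
def quatComp (j : ℂ) : Fin 4 → TrigPoly :=
  ![trigC 0 * trigC 1 * trigC 2 + C j * (trigS 0 * trigS 1 * trigS 2),
    trigS 0 * trigC 1 * trigC 2 + C j * (trigC 0 * trigS 1 * trigS 2),
    trigC 0 * trigS 1 * trigC 2 - C j * (trigS 0 * trigC 1 * trigS 2),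
    trigC 0 * trigC 1 * trigS 2 + C j * (trigS 0 * trigS 1 * trigC 2)]

theorem C_half_add : (C (1 / 2) : TrigPoly) + C (1 / 2) = 1 := by
  rw [← C_add]; norm_num

theorem C_I_sq : (C Complex.I : TrigPoly) * C Complex.I = -1 := by
  rw [← C_mul]; simp

theorem X_inl_eq (m : Fin 3) : (X (Sum.inl m) : TrigPoly) = trigC m + trigS m := by
  rw [trigC, trigS]; linear_combination (-X (Sum.inl m)) * C_half_add

theorem X_inr_eq (m : Fin 3) : (X (Sum.inr m) : TrigPoly) = trigC m - trigS m := by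
  rw [trigC, trigS]; linear_combination (-X (Sum.inr m)) * C_half_add

theorem trigCo_eq (m : Fin 3) : trigCo m = trigC m ^ 2 + trigS m ^ 2 := by
  rw [trigCo, X_inl_eq, X_inr_eq]
  linear_combination (trigC m ^ 2 + trigS m ^ 2) * C_half_add

theorem trigSi_eq (m : Fin 3) : trigSi m = trigC m * trigS m + trigC m * trigS m := by
  rw [trigSi, X_inl_eq, X_inr_eq]
  linear_combination (2 * trigC m * trigS m) * C_half_add

/-- The unit and the three diagonal entries of the rotation matrix. -/
def rotDiag : Fin 4 → TrigPoly :=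
  ![X (Sum.inl 0) * X (Sum.inr 0) * (X (Sum.inl 1) * X (Sum.inr 1)) *
      (X (Sum.inl 2) * X (Sum.inr 2)),
    X (Sum.inl 0) * X (Sum.inr 0) * trigCo 1 * trigCo 2,
    trigCo 0 * (X (Sum.inl 1) * X (Sum.inr 1)) * trigCo 2
      + C Complex.I * (trigSi 0 * trigSi 1 * trigSi 2),
    trigCo 0 * trigCo 1 * (X (Sum.inl 2) * X (Sum.inr 2))]

theorem four_mul_quatComp_sq (t : Fin 4) : ∃ c : Fin 4 → ℂ,
    4 * quatComp Complex.I t ^ 2 = ∑ i, C (c i) * rotDiag i := by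
  have hI := C_I_sq
  fin_cases t
  · refine ⟨![1, 1, 1, 1], ?_⟩
    simp [Fin.sum_univ_four, quatComp, rotDiag, trigCo_eq, trigSi_eq, X_inl_eq, X_inr_eq]
    linear_combination 4 * (trigS 0 * trigS 1 * trigS 2) ^ 2 * hI
  · refine ⟨![-1, -1, 1, 1], ?_⟩
    simp [Fin.sum_univ_four, quatComp, rotDiag, trigCo_eq, trigSi_eq, X_inl_eq, X_inr_eq]
    linear_combination 4 * (trigC 0 * trigS 1 * trigS 2) ^ 2 * hI
  · refine ⟨![-1, 1, -1, 1], ?_⟩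
    simp [Fin.sum_univ_four, quatComp, rotDiag, trigCo_eq, trigSi_eq, X_inl_eq, X_inr_eq]
    linear_combination 4 * (trigS 0 * trigC 1 * trigS 2) ^ 2 * hI
  · refine ⟨![-1, 1, 1, -1], ?_⟩
    simp [Fin.sum_univ_four, quatComp, rotDiag, trigCo_eq, trigSi_eq, X_inl_eq, X_inr_eq]
    linear_combination 4 * (trigS 0 * trigS 1 * trigC 2) ^ 2 * hI

theorem trigField_X_inl (m : Fin 3) :
    trigField (X (Sum.inl m)) = trigFieldCoeff m * X (Sum.inl m) := by
  rw [trigField, mkDerivation_X, Sum.elim_inl]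

theorem trigField_X_inr (m : Fin 3) :
    trigField (X (Sum.inr m)) = -trigFieldCoeff m * X (Sum.inr m) := by
  rw [trigField, mkDerivation_X, Sum.elim_inr]

theorem trigField_trigC (m : Fin 3) : trigField (trigC m) = trigFieldCoeff m * trigS m := by
  rw [trigC, trigS, Derivation.leibniz, derivation_C, map_add, trigField_X_inl, trigField_X_inr]
  simp only [smul_eq_mul]
  ring

theorem trigField_trigS (m : Fin 3) : trigField (trigS m) = trigFieldCoeff m * trigC m := by
  rw [trigC, trigS, Derivation.leibniz, derivation_C, map_sub, trigField_X_inl, trigField_X_inr]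
  simp only [smul_eq_mul]
  ring

theorem trigField_rotDiag (i : Fin 4) : trigField (rotDiag i)
    = if i = 2 then 32 * ∏ t, quatComp Complex.I t else 0 := by
  have hI := C_I_sq
  fin_cases i <;>
  simp [rotDiag, trigField_trigC, trigField_trigS, trigCo_eq, trigSi_eq, X_inl_eq, X_inr_eq,
    trigFieldCoeff, Derivation.leibniz, Derivation.leibniz_pow, Fin.prod_univ_four, quatComp]
  · ring
  · ring
  · generalize trigC 0 = c0, trigC 1 = c1, trigC 2 = c2, trigS 0 = s0, trigS 1 = s1,
      trigS 2 = s2, (C Complex.I : TrigPoly) = j at *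
    linear_combination (-32) * (((s0 * s1 * s2) * (c0 * s1 * s2) * (c0 * s1 * c2) * (c0 * c1 *
      s2) + (s0 * s1 * s2) * (s0 * c1 * c2) * (-(s0 * c1 * s2)) * (c0 * c1 * s2) + (s0 * s1 * s2)
      * (s0 * c1 * c2) * (c0 * s1 * c2) * (s0 * s1 * c2) + (c0 * c1 * c2) * (c0 * s1 * s2) * (-(s0
      * c1 * s2)) * (c0 * c1 * s2) + (c0 * c1 * c2) * (c0 * s1 * s2) * (c0 * s1 * c2) * (s0 * s1 *
      c2) + (c0 * c1 * c2) * (s0 * c1 * c2) * (-(s0 * c1 * s2)) * (s0 * s1 * c2)) + j * ((s0 * s1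
      * s2) * (c0 * s1 * s2) * (-(s0 * c1 * s2)) * (c0 * c1 * s2) + (s0 * s1 * s2) * (c0 * s1 *
      s2) * (c0 * s1 * c2) * (s0 * s1 * c2) + (s0 * s1 * s2) * (s0 * c1 * c2) * (-(s0 * c1 * s2))
      * (s0 * s1 * c2) + (c0 * c1 * c2) * (c0 * s1 * s2) * (-(s0 * c1 * s2)) * (s0 * s1 * c2)) +
      (j * j - 1) * ((s0 * s1 * s2) * (c0 * s1 * s2) * (-(s0 * c1 * s2)) * (s0 * s1 * c2))) * hI
  · ring

theorem isWeightedHomogeneous_X_mul_X' (m : Fin 3) (v w : Fin 3 ⊕ Fin 3)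
    (hv : trigWeight v = Pi.single m 1) (hw : trigWeight w = Pi.single m 1) :
    IsWeightedHomogeneous trigWeight (X v * X w : TrigPoly) (Pi.single m 2) := by
  have := (isWeightedHomogeneous_X ℂ trigWeight v).mul (isWeightedHomogeneous_X ℂ trigWeight w)
  rwa [hv, hw, ← Pi.single_add] at this

theorem isWeightedHomogeneous_X_mul_X (m : Fin 3) :
    IsWeightedHomogeneous trigWeight (X (Sum.inl m) * X (Sum.inr m) : TrigPoly)
      (Pi.single m 2) :=
  isWeightedHomogeneous_X_mul_X' m _ _ rfl rfl

theorem isWeightedHomogeneous_trigCo (m : Fin 3) :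
    IsWeightedHomogeneous trigWeight (trigCo m) (Pi.single m 2) := by
  rw [trigCo, sq, sq]
  exact ((isWeightedHomogeneous_X_mul_X' m _ _ rfl rfl).add
    (isWeightedHomogeneous_X_mul_X' m _ _ rfl rfl)).C_mul _

theorem isWeightedHomogeneous_trigSi (m : Fin 3) :
    IsWeightedHomogeneous trigWeight (trigSi m) (Pi.single m 2) := by
  rw [trigSi, sq, sq]
  exact ((isWeightedHomogeneous_X_mul_X' m _ _ rfl rfl).sub
    (isWeightedHomogeneous_X_mul_X' m _ _ rfl rfl)).C_mul _

theorem single_add_single_add_single (d : ℕ) :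
    (Pi.single 0 d + Pi.single 1 d + Pi.single 2 d : Fin 3 → ℕ) = fun _ => d := by
  ext m; fin_cases m <;> simp

theorem isWeightedHomogeneous_rotDiag (i : Fin 4) :
    IsWeightedHomogeneous trigWeight (rotDiag i) (fun _ => 2) := by
  rw [← single_add_single_add_single]
  have co := isWeightedHomogeneous_trigCo
  have si := isWeightedHomogeneous_trigSi
  have xx := isWeightedHomogeneous_X_mul_X
  fin_cases i
  · exact ((xx 0).mul (xx 1)).mul (xx 2)
  · exact ((xx 0).mul (co 1)).mul (co 2)
  · exact (((co 0).mul (xx 1)).mul (co 2)).add ((((si 0).mul (si 1)).mul (si 2)).C_mul _)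
  · exact ((co 0).mul (co 1)).mul (xx 2)

theorem isWeightedHomogeneous_trigC (m : Fin 3) :
    IsWeightedHomogeneous trigWeight (trigC m) (Pi.single m 1) :=
  ((isWeightedHomogeneous_X ℂ trigWeight (Sum.inl m)).add
    (isWeightedHomogeneous_X ℂ trigWeight (Sum.inr m))).C_mul (1 / 2)

theorem isWeightedHomogeneous_trigS (m : Fin 3) :
    IsWeightedHomogeneous trigWeight (trigS m) (Pi.single m 1) :=
  ((isWeightedHomogeneous_X ℂ trigWeight (Sum.inl m)).sub
    (isWeightedHomogeneous_X ℂ trigWeight (Sum.inr m))).C_mul (1 / 2)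

theorem isWeightedHomogeneous_quatComp (j : ℂ) (t : Fin 4) :
    IsWeightedHomogeneous trigWeight (quatComp j t) (fun _ => 1) := by
  rw [← single_add_single_add_single]
  have c := isWeightedHomogeneous_trigC
  have s := isWeightedHomogeneous_trigS
  fin_cases t
  · exact (((c 0).mul (c 1)).mul (c 2)).add ((((s 0).mul (s 1)).mul (s 2)).C_mul _)
  · exact (((s 0).mul (c 1)).mul (c 2)).add ((((c 0).mul (s 1)).mul (s 2)).C_mul _)
  · exact (((c 0).mul (s 1)).mul (c 2)).sub ((((s 0).mul (c 1)).mul (s 2)).C_mul _)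
  · exact (((c 0).mul (c 1)).mul (s 2)).add ((((s 0).mul (s 1)).mul (c 2)).C_mul _)

theorem isWeightedHomogeneous_prod_pow {ι : Type*} [Fintype ι] {f : ι → TrigPoly} {d : ℕ}
    (hf : ∀ i, IsWeightedHomogeneous trigWeight (f i) (fun _ => d)) (k : ι → ℕ) :
    IsWeightedHomogeneous trigWeight (∏ i, f i ^ k i) (fun _ => (∑ i, k i) * d) := by
  convert IsWeightedHomogeneous.prod Finset.univ (fun i => f i ^ k i) _
    (fun i _ => (hf i).pow (k i)) using 1
  ext m
  simp [Finset.sum_mul]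

theorem trigField_rotDiag_mul_prod (s : Fin 4 → ℕ) :
    trigField (rotDiag 2 * ∏ i, rotDiag i ^ s i)
      = (32 * ((s 2 : ℂ) + 1)) • ((∏ t, quatComp Complex.I t) * ∏ i, rotDiag i ^ s i) := by
  have h : rotDiag 2 * ∏ i, rotDiag i ^ s i
      = rotDiag 0 ^ s 0 * rotDiag 1 ^ s 1 * rotDiag 2 ^ (s 2 + 1) * rotDiag 3 ^ s 3 := by
    rw [Fin.prod_univ_four]; ring
  have h' : (C (32 * ((s 2 : ℂ) + 1)) : TrigPoly) = 32 * ((s 2 : TrigPoly) + 1) := by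
    rw [C_mul, C_add, C_1, map_natCast, map_ofNat]
  rw [h, MvPolynomial.smul_eq_C_mul, h', Fin.prod_univ_four (fun i => rotDiag i ^ s i)]
  simp only [Derivation.leibniz, Derivation.leibniz_pow, trigField_rotDiag, Fin.reduceEq,
    if_false, if_true, smul_zero, smul_eq_mul, nsmul_eq_mul, Nat.add_sub_cancel, Nat.cast_add,
    Nat.cast_one, mul_zero, add_zero, zero_add]
  ring

theorem quad_prod_quatComp_mul {n : ℕ} (ω : Fin 3 → Fin (n + 1) → ℂ) (g : Fin 3 → ℕ → ℂ)
    (hg : ∀ m, ∀ a ≤ n, ∑ i, ω m i * (i : ℂ) ^ a = g m a) (u : Fin 3 → ℂ)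
    (hu : u 0 + u 2 = u 1)
    (hrec : ∀ m a b, a + b + 2 = n →
      ((a : ℂ) - b + 2 * u m) * g m (a + 2) + ((a : ℂ) - b - 2 * u m) * g m a = 0)
    {L : ℕ} (hL : 2 * L + 4 = n) {F : MvPolynomial (Fin 4) ℂ} (hF : F.IsHomogeneous L) :
    quad ω ((∏ t, quatComp Complex.I t) * aeval rotDiag F) = 0 := by
  rw [F.as_sum, map_sum, Finset.mul_sum, map_sum]
  refine Finset.sum_eq_zero fun s hs => ?_
  have hw : ∑ i, s i = L := by
    have := hF (mem_support_iff.1 hs)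
    rw [Finsupp.weight_apply, Finsupp.sum_fintype _ _ (by simp)] at this
    simpa only [Pi.one_apply, smul_eq_mul, mul_one] using this
  have hom := (isWeightedHomogeneous_rotDiag 2).mul
    (isWeightedHomogeneous_prod_pow isWeightedHomogeneous_rotDiag s)
  have h0 := quad_trigField ω g hg u hu hrec (d := 2 + (∑ i, s i) * 2) (by omega) hom
  rw [trigField_rotDiag_mul_prod, map_smul, smul_eq_zero] at h0
  have hne : (32 * ((s 2 : ℂ) + 1)) ≠ 0 := by
    have : (s 2 : ℂ) + 1 ≠ 0 := Nat.cast_add_one_ne_zero _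
    simpa using this
  rw [aeval_monomial, Finsupp.prod_fintype _ _ (by simp), ← Algebra.smul_def, mul_smul_comm,
    map_smul, h0.resolve_left hne, smul_zero]

theorem rename_swap_trigC (m k : Fin 3) :
    rename (Equiv.swap (Sum.inl m) (Sum.inr m)) (trigC k) = trigC k := by
  by_cases h : k = m
  · subst h
    simp [trigC, add_comm]
  · rw [trigC, map_mul, map_add, rename_X, rename_X,
      Equiv.swap_apply_of_ne_of_ne (by simpa using h) (by simp),
      Equiv.swap_apply_of_ne_of_ne (by simp) (by simpa using h), rename_C]

theorem rename_swap_trigS (m k : Fin 3) :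
    rename (Equiv.swap (Sum.inl m) (Sum.inr m)) (trigS k)
      = (if k = m then -1 else 1) * trigS k := by
  by_cases h : k = m
  · subst h
    simp only [trigS, map_mul, map_sub, rename_X, rename_C, Equiv.swap_apply_left,
      Equiv.swap_apply_right, if_true]
    ring
  · rw [trigS, map_mul, map_sub, rename_X, rename_X,
      Equiv.swap_apply_of_ne_of_ne (by simpa using h) (by simp),
      Equiv.swap_apply_of_ne_of_ne (by simp) (by simpa using h), rename_C, if_neg h, one_mul]

theorem rename_swap_quatComp (m : Fin 3) (t : Fin 4) :
    rename (Equiv.swap (Sum.inl m) (Sum.inr m)) (quatComp Complex.I t)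
      = (if t = m.succ then -1 else 1) * quatComp (-Complex.I) t := by
  fin_cases t <;>
    simp only [quatComp, Fin.zero_eta, Fin.mk_one, Fin.reduceFinMk, Matrix.cons_val, map_add,
      map_sub, map_mul, rename_C, rename_swap_trigC, rename_swap_trigS, C_neg] <;>
    fin_cases m <;> simp <;> ring

theorem prod_quatComp_pow_of_odd (l : Fin 4 → ℕ) : ∃ F : MvPolynomial (Fin 4) ℂ,
    F.IsHomogeneous (∑ t, l t) ∧ 4 ^ (∑ t, l t) * ∏ t, quatComp Complex.I t ^ (2 * l t + 1)
      = (∏ t, quatComp Complex.I t) * aeval rotDiag F := by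
  choose c hc using four_mul_quatComp_sq
  refine ⟨∏ t, (∑ i, C (c t i) * X i) ^ l t, ?_, ?_⟩
  · refine IsHomogeneous.prod _ _ _ fun t _ => ?_
    have : (∑ i, C (c t i) * X i : MvPolynomial (Fin 4) ℂ).IsHomogeneous 1 :=
      IsHomogeneous.sum _ _ _ fun i _ => isHomogeneous_C_mul_X _ _
    simpa using this.pow (l t)
  · have : ∀ t, aeval rotDiag (∑ i, C (c t i) * X i : MvPolynomial (Fin 4) ℂ)
        = 4 * quatComp Complex.I t ^ 2 := fun t => by
      rw [hc, map_sum]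
      simp [← algebraMap_eq]
    simp only [map_prod, map_pow, this]
    rw [← Finset.prod_pow_eq_pow_sum, ← Finset.prod_mul_distrib, ← Finset.prod_mul_distrib]
    exact Finset.prod_congr rfl fun t _ => by ring

theorem quad_prod_quatComp_pow {n : ℕ} (hn : Even n) (ω : Fin 3 → Fin (n + 1) → ℂ)
    (g : Fin 3 → ℕ → ℂ) (hg : ∀ m, ∀ a ≤ n, ∑ i, ω m i * (i : ℂ) ^ a = g m a)
    (hsymm : ∀ m a b, a + b = n → g m a = g m b) (u : Fin 3 → ℂ) (hu : u 0 + u 2 = u 1)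
    (hrec : ∀ m a b, a + b + 2 = n →
      ((a : ℂ) - b + 2 * u m) * g m (a + 2) + ((a : ℂ) - b - 2 * u m) * g m a = 0)
    (k : Fin 4 → ℕ) (hk : ∑ t, k t = n) :
    quad ω (∏ t, quatComp Complex.I t ^ k t) = quad ω (∏ t, quatComp (-Complex.I) t ^ k t) := by
  have hom := isWeightedHomogeneous_prod_pow (isWeightedHomogeneous_quatComp Complex.I) k
  rw [hk, mul_one] at hom
  have swap : ∀ m : Fin 3, quad ω (∏ t, quatComp Complex.I t ^ k t)
      = (-1) ^ k m.succ * quad ω (∏ t, quatComp (-Complex.I) t ^ k t) := by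
    intro m
    rw [← quad_rename_swap ω g hg hsymm m hom, map_prod]
    simp only [map_pow, rename_swap_quatComp, mul_pow, Finset.prod_mul_distrib]
    rw [Finset.prod_eq_single m.succ (fun t _ ht => by simp [ht]) (by simp), if_pos rfl,
      show ((-1 : TrigPoly) ^ k m.succ) = C ((-1) ^ k m.succ) by simp,
      ← MvPolynomial.smul_eq_C_mul, map_smul, smul_eq_mul]
  by_cases hodd : ∀ m : Fin 3, Odd (k m.succ)
  · have hodd' : ∀ t, Odd (k t) := by
      refine Fin.cases ?_ hodd
      rw [Fin.sum_univ_succ, Fin.sum_univ_three] at hk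
      have h0 := hodd 0
      have h1 := hodd 1
      have h2 := hodd 2
      subst hk
      grind
    choose l hl using hodd'
    obtain ⟨F, hF, h⟩ := prod_quatComp_pow_of_odd l
    have hL : 2 * ∑ t, l t + 4 = n := by
      simp only [hl, Finset.sum_add_distrib, ← Finset.mul_sum] at hk
      simpa using hk
    have h0 := quad_prod_quatComp_mul ω g hg u hu hrec hL hF
    rw [← h, show (4 : TrigPoly) ^ (∑ t, l t) = C (4 ^ (∑ t, l t)) by
      rw [map_pow, map_ofNat], ← MvPolynomial.smul_eq_C_mul, map_smul, smul_eq_zero] at h0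
    simp only [← hl] at h0
    have h0 := h0.resolve_left (pow_ne_zero _ (by norm_num))
    have h1 := swap 0
    rw [(hodd 0).neg_one_pow, h0] at h1
    rw [h0]
    linear_combination -h1
  · push Not at hodd
    obtain ⟨m, hm⟩ := hodd
    rw [swap m, (Nat.not_odd_iff_even.1 hm).neg_one_pow, one_mul]
end Quadrature

section InvolutionProducts

variable {𝒞 : Type*} [Ring 𝒞] [Algebra ℂ 𝒞]

theorem prod_map_mul_prod_map {ι M : Type*} [Monoid M] {f g : ι → M}
    (h : ∀ j k, j ≠ k → Commute (f j) (g k)) {l : List ι} (hl : l.Nodup) :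
    (l.map f).prod * (l.map g).prod = (l.map fun j => f j * g j).prod := by
  induction l with
  | nil => simp
  | cons a l ih =>
    obtain ⟨ha, hl⟩ := List.nodup_cons.1 hl
    have hc : Commute ((l.map f).prod) (g a) := by
      refine Commute.list_prod_left _ _ fun x hx => ?_
      obtain ⟨j, hj, rfl⟩ := List.mem_map.1 hx
      exact h j a fun e => ha (e ▸ hj)
    simp only [List.map_cons, List.prod_cons, ← ih hl]
    rw [mul_assoc, ← mul_assoc _ (g a), hc.eq]
    simp only [mul_assoc]

theorem sum_smul_prod_congr {ι κ τ : Type*} [Fintype κ] [Fintype τ] (m : ι → τ → 𝒞)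
    (x x' : κ → τ → ℂ) (l : List ι) (Ω Ω' : κ → ℂ) (m₀ : 𝒞)
    (h : ∀ w : List τ, w.length = l.length →
      ∑ i, Ω i * (w.map (x i)).prod = ∑ i, Ω' i * (w.map (x' i)).prod) :
    ∑ i, Ω i • (m₀ * (l.map fun j => ∑ t, x i t • m j t).prod)
      = ∑ i, Ω' i • (m₀ * (l.map fun j => ∑ t, x' i t • m j t).prod) := by
  induction l generalizing Ω Ω' m₀ with
  | nil =>
    have := h [] rfl
    simp only [List.map_nil, List.prod_nil, mul_one] at this
    simp only [List.map_nil, List.prod_nil, mul_one, ← Finset.sum_smul, this]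
  | cons a l ih =>
    have key : ∀ (Ω : κ → ℂ) (x : κ → τ → ℂ),
        ∑ i, Ω i • (m₀ * ((a :: l).map fun j => ∑ t, x i t • m j t).prod)
          = ∑ t, ∑ i, (Ω i * x i t) •
            ((m₀ * m a t) * (l.map fun j => ∑ t, x i t • m j t).prod) := by
      intro Ω x
      rw [Finset.sum_comm]
      refine Finset.sum_congr rfl fun i _ => ?_
      simp only [List.map_cons, List.prod_cons, Finset.sum_mul, Finset.mul_sum, Finset.smul_sum,
        smul_mul_assoc, mul_smul_comm, smul_smul, mul_assoc]
    rw [key, key]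
    refine Finset.sum_congr rfl fun t _ => ih _ _ _ fun w hw => ?_
    simpa [mul_assoc] using h (t :: w) (by simpa using hw)

/-- Simultaneous eigenvectors of commuting involutions detect zero. -/
theorem eq_zero_of_forall_eigen {ι : Type*} [Fintype ι] [DecidableEq ι] {T : ι → 𝒞}
    (hT : ∀ j k, Commute (T j) (T k)) (hsq : ∀ j, T j * T j = 1) {y : 𝒞}
    (h : ∀ (s : Finset ι) (e : 𝒞), (∀ j, T j * e = (if j ∈ s then (1 : ℂ) else -1) • e) →
      y * e = 0) : y = 0 := by
  have key : ∀ t : Finset ι,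
      (∀ (s : Finset ι) (e : 𝒞), (∀ j ∈ t, T j * e = (if j ∈ s then (1 : ℂ) else -1) • e) →
        y * e = 0) → y = 0 := by
    intro t
    induction t using Finset.induction_on with
    | empty => intro h; simpa using h ∅ 1 (by simp)
    | insert a t ha ih =>
      refine fun h => ih fun s e he => ?_
      have hp := h (insert a s) (e + T a * e) fun j hj => ?_
      · have hm := h (s.erase a) (e - T a * e) fun j hj => ?_
        · have : (2 : ℂ) • (y * e) = 0 := by
            rw [two_smul]
            calc y * e + y * e = y * (e + T a * e) + y * (e - T a * e) := by noncomm_ring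
              _ = 0 := by rw [hp, hm, add_zero]
          exact (smul_eq_zero.1 this).resolve_left two_ne_zero
        · rcases Finset.mem_insert.1 hj with rfl | hj
          · rw [if_neg (Finset.notMem_erase _ _), mul_sub, ← mul_assoc, hsq, one_mul, neg_smul,
              one_smul, neg_sub]
          · have hja : j ≠ a := fun e => ha (e ▸ hj)
            simp only [Finset.mem_erase, ne_eq, hja, not_false_eq_true, true_and]
            rw [mul_sub, ← mul_assoc, (hT j a).eq, mul_assoc, he j hj, mul_smul_comm, smul_sub]
      · rcases Finset.mem_insert.1 hj with rfl | hj
        · rw [if_pos (Finset.mem_insert_self _ _), mul_add, ← mul_assoc, hsq, one_mul,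
            one_smul, add_comm]
        · have hja : j ≠ a := fun e => ha (e ▸ hj)
          simp only [Finset.mem_insert, hja, false_or]
          rw [mul_add, ← mul_assoc, (hT j a).eq, mul_assoc, he j hj, mul_smul_comm, smul_add]
  exact key Finset.univ fun s e he => h s e fun j => he j (Finset.mem_univ j)

theorem prod_map_mul_eigen {ι : Type*} {f : ι → 𝒞} {c : ι → ℂ} {e : 𝒞}
    (h : ∀ j, f j * e = c j • e) (l : List ι) : (l.map f).prod * e = (l.map c).prod • e := by
  induction l with
  | nil => simp
  | cons a l ih =>
    rw [List.map_cons, List.prod_cons, mul_assoc, ih, mul_smul_comm, h, smul_smul, mul_comm,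
      List.map_cons, List.prod_cons]

/-- The element with eigenvalue `x` where the involution `T` is `1`, and `1` where it is `-1`. -/
def involutionFactor (x : ℂ) (T : 𝒞) : 𝒞 := ((x + 1) / 2) • 1 + ((x - 1) / 2) • T

/-- The function `∑ i, ω i * i ^ p` of the number `p` of involutions in `T` equal to `1`. -/
def quadProd {n : ℕ} (ω : Fin (n + 1) → ℂ) (T : Fin n → 𝒞) : 𝒞 :=
  ∑ i, ω i • ((List.finRange n).map fun j => involutionFactor (i : ℂ) (T j)).prod

theorem map_quadProd {𝒟 : Type*} [Ring 𝒟] [Algebra ℂ 𝒟] (f : 𝒞 →ₐ[ℂ] 𝒟) {n : ℕ}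
    (ω : Fin (n + 1) → ℂ) (T : Fin n → 𝒞) :
    f (quadProd ω T) = quadProd ω fun j => f (T j) := by
  simp [quadProd, involutionFactor, map_list_prod, Function.comp_def]

theorem quadProd_mul_eigen {n : ℕ} (ω : Fin (n + 1) → ℂ) {T : Fin n → 𝒞} {s : Finset (Fin n)}
    {e : 𝒞} (he : ∀ j, T j * e = (if j ∈ s then (1 : ℂ) else -1) • e) :
    quadProd ω T * e = (∑ i, ω i * (i : ℂ) ^ s.card) • e := by
  have hf : ∀ (x : ℂ) j, involutionFactor x (T j) * e = (if j ∈ s then x else 1) • e := by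
    intro x j
    rw [involutionFactor, add_mul, smul_mul_assoc, smul_mul_assoc, he, one_mul, smul_smul,
      ← add_smul]
    congr 1
    split_ifs <;> ring
  rw [quadProd, Finset.sum_mul, Finset.sum_smul]
  refine Finset.sum_congr rfl fun i _ => ?_
  rw [smul_mul_assoc, prod_map_mul_eigen (hf _), smul_smul, ← List.ofFn_eq_map, List.prod_ofFn]
  simp

theorem quadProd_mul_right {n : ℕ} (ω : Fin (n + 1) → ℂ) (g : ℕ → ℂ)
    (hg : ∀ a ≤ n, ∑ i, ω i * (i : ℂ) ^ a = g a) (hsymm : ∀ a b, a + b = n → g a = g b)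
    {T : Fin n → 𝒞} (hT : ∀ j k, Commute (T j) (T k)) (hsq : ∀ j, T j * T j = 1) {σ : 𝒞}
    (hσ : σ * σ = 1) (hTσ : ∀ j, Commute (T j) σ) :
    quadProd ω (fun j => T j * σ) = quadProd ω T := by
  rw [← sub_eq_zero]
  refine eq_zero_of_forall_eigen hT hsq fun s e he => ?_
  have card_le : ∀ s : Finset (Fin n), s.card ≤ n := fun s => by
    simpa using Finset.card_le_univ s
  have comm : ∀ j, T j * (σ * e) = (if j ∈ s then (1 : ℂ) else -1) • (σ * e) := fun j => by
    rw [← mul_assoc, (hTσ j).eq, mul_assoc, he, mul_smul_comm]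
  have hσσ : σ * (σ * e) = e := by rw [← mul_assoc, hσ, one_mul]
  have hp : (quadProd ω (fun j => T j * σ) - quadProd ω T) * (e + σ * e) = 0 := by
    rw [sub_mul, quadProd_mul_eigen (s := s), quadProd_mul_eigen (s := s), sub_self]
    · intro j
      rw [mul_add, he, comm, smul_add]
    · intro j
      rw [mul_assoc, mul_add, hσσ, add_comm, mul_add, he, comm, smul_add]
  have hm : (quadProd ω (fun j => T j * σ) - quadProd ω T) * (e - σ * e) = 0 := by
    rw [sub_mul, quadProd_mul_eigen (s := sᶜ), quadProd_mul_eigen (s := s),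
      hg _ (card_le _), hg _ (card_le _), hsymm s.card sᶜ.card, sub_self]
    · rw [Finset.card_add_card_compl, Fintype.card_fin]
    · intro j
      rw [mul_sub, he, comm, smul_sub]
    · intro j
      rw [mul_assoc, mul_sub, hσσ, ← neg_sub, mul_neg, mul_sub, he, comm, ← smul_sub]
      by_cases h : j ∈ s <;> simp [h]
  generalize quadProd ω (fun j => T j * σ) - quadProd ω T = D at hp hm ⊢
  have : (2 : ℂ) • (D * e) = 0 := by
    rw [two_smul]
    calc D * e + D * e = D * (e + σ * e) + D * (e - σ * e) := by noncomm_ring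
      _ = 0 := by rw [hp, hm, add_zero]
  exact (smul_eq_zero.1 this).resolve_left two_ne_zero

theorem commute_quadProd {n : ℕ} (ω : Fin (n + 1) → ℂ) {z : 𝒞} {T : Fin n → 𝒞}
    (h : ∀ j, Commute z (T j)) : Commute z (quadProd ω T) := by
  refine Commute.sum_right _ _ _ fun i _ =>
    (Commute.list_prod_right _ _ fun x hx => ?_).smul_right _
  obtain ⟨j, _, rfl⟩ := List.mem_map.1 hx
  exact ((Commute.one_right z).smul_right _).add_right ((h j).smul_right _)

theorem commute_quadProd_of_anticommute {n : ℕ} (ω : Fin (n + 1) → ℂ) (g : ℕ → ℂ)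
    (hg : ∀ a ≤ n, ∑ i, ω i * (i : ℂ) ^ a = g a) (hsymm : ∀ a b, a + b = n → g a = g b)
    {T : Fin n → 𝒞} (hT : ∀ j k, Commute (T j) (T k)) (hsq : ∀ j, T j * T j = 1) {z : 𝒞}
    (hz : ∀ j, z * T j = -(T j * z)) : Commute z (quadProd ω T) := by
  have hl : ∀ (x : ℂ) (l : List (Fin n)), z * (l.map fun j => involutionFactor x (T j)).prod
      = (l.map fun j => involutionFactor x (T j * -1)).prod * z := by
    intro x l
    induction l with
    | nil => simp
    | cons a l ih =>
      have : z * involutionFactor x (T a) = involutionFactor x (T a * -1) * z := by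
        simp [involutionFactor, mul_add, add_mul, hz]
      rw [List.map_cons, List.prod_cons, ← mul_assoc, this, mul_assoc, ih, ← mul_assoc,
        List.map_cons, List.prod_cons]
  have h : z * quadProd ω T = quadProd ω (fun j => T j * -1) * z := by
    simp only [quadProd, Finset.mul_sum, Finset.sum_mul, mul_smul_comm, smul_mul_assoc, hl]
  rw [commute_iff_eq, h, quadProd_mul_right ω g hg hsymm hT hsq (by simp)
    fun j => (Commute.one_right _).neg_right]

end InvolutionProducts

section Pauli

open MvPolynomial

variable {𝒞 : Type*} [Ring 𝒞] [Algebra ℂ 𝒞]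

theorem involutionFactor_mul_mul (x : Fin 3 → ℂ) {A B C : 𝒞} {j : ℂ} (hC : C * C = 1)
    (hAB : A * B = j • C) (hAC : A * C = -j • B) (hBC : B * C = j • A) :
    involutionFactor (x 0) A * involutionFactor (x 1) B * involutionFactor (x 2) C
      = ∑ t, aeval (Sum.elim x 1) (quatComp j t) • ![1, A, B, C] t := by
  simp only [involutionFactor, add_mul, mul_add, smul_mul_assoc, mul_smul_comm, smul_smul,
    one_mul, mul_one, hAB, hAC, hBC, hC, Fin.sum_univ_four, quatComp, trigC, trigS, Matrix.cons_val,
    map_add, map_sub, map_mul, aeval_X, Sum.elim_inl, Sum.elim_inr, Pi.one_apply, algHom_C,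
    Algebra.algebraMap_self, RingHom.id_apply]
  module

theorem involutionFactor_mul_mul_reverse (x : Fin 3 → ℂ) {A B C : 𝒞} {j : ℂ} (hA : A * A = 1)
    (hBA : B * A = j • C) (hCA : C * A = -j • B) (hCB : C * B = j • A) :
    involutionFactor (x 2) C * involutionFactor (x 1) B * involutionFactor (x 0) A
      = ∑ t, aeval (Sum.elim x 1) (quatComp j t) • ![1, A, B, C] t := by
  simp only [involutionFactor, add_mul, mul_add, smul_mul_assoc, mul_smul_comm, smul_smul,
    one_mul, mul_one, hBA, hCA, hCB, hA, Fin.sum_univ_four, quatComp, trigC, trigS, Matrix.cons_val,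
    map_add, map_sub, map_mul, aeval_X, Sum.elim_inl, Sum.elim_inr, Pi.one_apply, algHom_C,
    Algebra.algebraMap_self, RingHom.id_apply]
  module

theorem sum_prod_map_quatComp {n : ℕ} (ω : Fin 3 → Fin (n + 1) → ℂ) (j : ℂ) (w : List (Fin 4)) :
    ∑ t, (∏ m, ω m (t m)) * (w.map fun i => aeval (node t) (quatComp j i)).prod
      = quad ω (∏ i, quatComp j i ^ w.count i) := by
  rw [quad_apply]
  refine Finset.sum_congr rfl fun t _ => ?_
  rw [Finset.prod_list_map_count, map_prod]
  simp only [map_pow]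
  congr 1
  refine Finset.prod_subset (Finset.subset_univ _) fun i _ hi => ?_
  rw [List.count_eq_zero.2 (by simpa using hi), pow_zero]

theorem quadProd_mul_mul {n : ℕ} (ω : Fin 3 → Fin (n + 1) → ℂ) (π : Equiv.Perm (Fin 3))
    {A B C : Fin n → 𝒞} (hAB : ∀ j k, j ≠ k → Commute (A j) (B k))
    (hAC : ∀ j k, j ≠ k → Commute (A j) (C k))
    (hBC : ∀ j k, j ≠ k → Commute (B j) (C k)) :
    quadProd (ω (π 0)) A * quadProd (ω (π 1)) B * quadProd (ω (π 2)) C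
      = ∑ t : Fin 3 → Fin (n + 1), (∏ m, ω m (t m)) • ((List.finRange n).map fun j =>
          involutionFactor (t (π 0) : ℂ) (A j) * involutionFactor (t (π 1) : ℂ) (B j) *
            involutionFactor (t (π 2) : ℂ) (C j)).prod := by
  have comm : ∀ {S T : 𝒞} (x y : ℂ), Commute S T →
      Commute (involutionFactor x S) (involutionFactor y T) := by
    intro S T x y h
    refine Commute.add_left ?_ ?_ <;> refine Commute.add_right ?_ ?_
    · exact ((Commute.one_left _).smul_left _).smul_right _
    · exact ((Commute.one_left _).smul_left _).smul_right _
    · exact ((Commute.one_right _).smul_left _).smul_right _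
    · exact (h.smul_left _).smul_right _
  let e : (Fin 3 → Fin (n + 1)) ≃ Fin (n + 1) × Fin (n + 1) × Fin (n + 1) :=
    { toFun := fun t => (t (π 0), t (π 1), t (π 2))
      invFun := fun p m => ![p.1, p.2.1, p.2.2] (π.symm m)
      left_inv := fun t => funext fun m => by
        obtain ⟨k, rfl⟩ := π.surjective m
        dsimp only
        rw [Equiv.symm_apply_apply]
        fin_cases k <;> rfl
      right_inv := fun p => by simp }
  have key : ∀ i₀ i₁ i₂ : Fin (n + 1),
      ((List.finRange n).map fun j => involutionFactor (i₀ : ℂ) (A j)).prod *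
        (((List.finRange n).map fun j => involutionFactor (i₁ : ℂ) (B j)).prod *
        ((List.finRange n).map fun j => involutionFactor (i₂ : ℂ) (C j)).prod)
      = ((List.finRange n).map fun j => involutionFactor (i₀ : ℂ) (A j) *
          involutionFactor (i₁ : ℂ) (B j) * involutionFactor (i₂ : ℂ) (C j)).prod := by
    intro i₀ i₁ i₂
    have hn := List.nodup_finRange n
    rw [← mul_assoc, prod_map_mul_prod_map (fun j k h => comm _ _ (hAB j k h)) hn,
      prod_map_mul_prod_map (fun j k h => (comm _ _ (hAC j k h)).mul_left
        (comm _ _ (hBC j k h))) hn]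
  rw [← e.symm.sum_comp, Fintype.sum_prod_type, mul_assoc, quadProd, quadProd, quadProd,
    Finset.sum_mul_sum, Finset.sum_mul_sum]
  simp only [Fintype.sum_prod_type, Finset.mul_sum]
  refine Finset.sum_congr rfl fun i₀ _ => Finset.sum_congr rfl fun i₁ _ =>
    Finset.sum_congr rfl fun i₂ _ => ?_
  rw [smul_mul_smul_comm, smul_mul_smul_comm, key, ← Equiv.prod_comp π, Fin.prod_univ_three,
    mul_assoc (ω _ _)]
  simp [e]

/-- The Yang–Baxter identity for `quadProd` of mutually commuting Pauli triples. -/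
theorem quadProd_pauli {n : ℕ} (hn : Even n) (ω : Fin 3 → Fin (n + 1) → ℂ)
    (g : Fin 3 → ℕ → ℂ) (hg : ∀ m, ∀ a ≤ n, ∑ i, ω m i * (i : ℂ) ^ a = g m a)
    (hsymm : ∀ m a b, a + b = n → g m a = g m b) (u : Fin 3 → ℂ) (hu : u 0 + u 2 = u 1)
    (hrec : ∀ m a b, a + b + 2 = n →
      ((a : ℂ) - b + 2 * u m) * g m (a + 2) + ((a : ℂ) - b - 2 * u m) * g m a = 0)
    {A B C : Fin n → 𝒞} (hA : ∀ j, A j * A j = 1) (hB : ∀ j, B j * B j = 1)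
    (hAB : ∀ j, B j * A j = -(A j * B j)) (hC : ∀ j, C j = -Complex.I • (A j * B j))
    (hAA' : ∀ j k, j ≠ k → Commute (A j) (A k)) (hBB' : ∀ j k, j ≠ k → Commute (B j) (B k))
    (hAB' : ∀ j k, j ≠ k → Commute (A j) (B k)) :
    quadProd (ω 0) A * quadProd (ω 1) B * quadProd (ω 2) C
      = quadProd (ω 2) C * quadProd (ω 1) B * quadProd (ω 0) A := by
  have hAC' : ∀ j k, j ≠ k → Commute (A j) (C k) := fun j k h => by
    rw [hC]; exact ((hAA' j k h).mul_right (hAB' j k h)).smul_right _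
  have hBC' : ∀ j k, j ≠ k → Commute (B j) (C k) := fun j k h => by
    rw [hC]; exact (((hAB' k j h.symm).symm).mul_right (hBB' j k h)).smul_right _
  have hAAB : ∀ j, A j * (A j * B j) = B j := fun j => by rw [← mul_assoc, hA, one_mul]
  have hABB : ∀ j, A j * B j * B j = A j := fun j => by rw [mul_assoc, hB, mul_one]
  have hABA : ∀ j, A j * B j * A j = -B j := fun j => by rw [mul_assoc, hAB, mul_neg, hAAB]
  have hBAB : ∀ j, B j * (A j * B j) = -A j := fun j => by
    rw [← mul_assoc, hAB, neg_mul, hABB]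
  have hCC : ∀ j, C j * C j = 1 := fun j => by
    rw [hC, smul_mul_smul_comm, ← mul_assoc, hABA, neg_mul, neg_mul, hB]
    simp
  have h₁ := quadProd_mul_mul ω 1 hAB' hAC' hBC'
  have h₂ := quadProd_mul_mul ω Fin.revPerm (fun j k h => (hBC' k j h.symm).symm)
      (fun j k h => (hAC' k j h.symm).symm) fun j k h => (hAB' k j h.symm).symm
  have e₁ := fun (t : Fin 3 → Fin (n + 1)) j => involutionFactor_mul_mul
    (fun m => ((t m : ℕ) : ℂ)) (j := Complex.I) (hCC j) (A := A j) (B := B j)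
    (by simp [hC, smul_smul]) (by simp [hC, hAAB]) (by simp [hC, hBAB])
  have e₂ := fun (t : Fin 3 → Fin (n + 1)) j => involutionFactor_mul_mul_reverse
    (fun m => ((t m : ℕ) : ℂ)) (j := -Complex.I) (hA j) (B := B j) (C := C j)
    (by simp [hC, hAB, smul_smul]) (by simp [hC, hABA]) (by simp [hC, hABB])
  simp only [Equiv.Perm.coe_one, id_eq, e₁] at h₁
  simp only [Fin.revPerm_apply, Fin.reduceRev, e₂] at h₂
  rw [h₁, h₂]
  have h := sum_smul_prod_congr (fun j => ![1, A j, B j, C j])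
    (fun t i => aeval (node t) (quatComp Complex.I i))
    (fun t i => aeval (node t) (quatComp (-Complex.I) i)) (List.finRange n)
    (fun t : Fin 3 → Fin (n + 1) => ∏ m, ω m (t m)) (fun t => ∏ m, ω m (t m)) 1 fun w hw => ?_
  · simp only [one_mul] at h
    exact h
  · rw [sum_prod_map_quatComp, sum_prod_map_quatComp]
    refine quad_prod_quatComp_pow hn ω g hg hsymm u hu hrec _ ?_
    rw [← List.length_finRange (n := n), ← hw]
    simpa using Multiset.sum_count_eq_card (s := Finset.univ) (m := (w : Multiset (Fin 4)))
      (by simp)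

end Pauli

section Klein

variable {𝒞 : Type*} [Ring 𝒞] [Algebra ℂ 𝒞]

/-- The Pauli matrices. -/
def pauli : Fin 3 → Matrix (Fin 2) (Fin 2) ℂ :=
  ![!![0, 1; 1, 0], !![0, -Complex.I; Complex.I, 0], !![1, 0; 0, -1]]

theorem pauli_mul_self (m : Fin 3) : pauli m * pauli m = 1 := by
  fin_cases m <;> ext i j <;> fin_cases i <;> fin_cases j <;>
    simp [pauli, Matrix.mul_apply, Fin.sum_univ_two]

theorem pauli_one_mul_zero : pauli 1 * pauli 0 = -(pauli 0 * pauli 1) := by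
  ext i j; fin_cases i <;> fin_cases j <;> simp [pauli, Matrix.mul_apply, Fin.sum_univ_two]

theorem pauli_two_eq : pauli 2 = -Complex.I • (pauli 0 * pauli 1) := by
  ext i j; fin_cases i <;> fin_cases j <;> simp [pauli]

theorem quadProd_tmul {n : ℕ} (ω : Fin (n + 1) → ℂ) (g : ℕ → ℂ)
    (hg : ∀ a ≤ n, ∑ i, ω i * (i : ℂ) ^ a = g a) (hsymm : ∀ a b, a + b = n → g a = g b)
    {𝒟 : Type*} [Ring 𝒟] [Algebra ℂ 𝒟] {T : Fin n → 𝒞} (hT : ∀ j k, Commute (T j) (T k))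
    (hsq : ∀ j, T j * T j = 1) {σ : 𝒟} (hσ : σ * σ = 1) :
    quadProd ω (fun j => T j ⊗ₜ[ℂ] σ)
      = (Algebra.TensorProduct.includeLeft : 𝒞 →ₐ[ℂ] 𝒞 ⊗[ℂ] 𝒟) (quadProd ω T) := by
  have h := quadProd_mul_right (T := fun j => T j ⊗ₜ[ℂ] (1 : 𝒟)) ω g hg hsymm
    (fun j k => by simp [commute_iff_eq, (hT j k).eq])
    (fun j => by simp [hsq, Algebra.TensorProduct.one_def]) (σ := (1 : 𝒞) ⊗ₜ[ℂ] σ)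
    (by simp [hσ, Algebra.TensorProduct.one_def]) (fun j => by simp [commute_iff_eq])
  rw [map_quadProd]
  simpa using h

/-- The Yang–Baxter identity for `quadProd` of mutually anticommuting Klein triples. -/
theorem quadProd_yangBaxter {n : ℕ} (hn : Even n) (ω : Fin 3 → Fin (n + 1) → ℂ)
    (g : Fin 3 → ℕ → ℂ) (hg : ∀ m, ∀ a ≤ n, ∑ i, ω m i * (i : ℂ) ^ a = g m a)
    (hsymm : ∀ m a b, a + b = n → g m a = g m b) (u : Fin 3 → ℂ) (hu : u 0 + u 2 = u 1)
    (hrec : ∀ m a b, a + b + 2 = n →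
      ((a : ℂ) - b + 2 * u m) * g m (a + 2) + ((a : ℂ) - b - 2 * u m) * g m a = 0)
    {A B C : Fin n → 𝒞} (hA : ∀ j, A j * A j = 1) (hB : ∀ j, B j * B j = 1)
    (hAB : ∀ j, Commute (A j) (B j)) (hC : ∀ j, C j = A j * B j)
    (hAA' : ∀ j k, Commute (A j) (A k)) (hBB' : ∀ j k, Commute (B j) (B k))
    (hAB' : ∀ j k, j ≠ k → B k * A j = -(A j * B k)) :
    quadProd (ω 0) A * quadProd (ω 1) B * quadProd (ω 2) C
      = quadProd (ω 2) C * quadProd (ω 1) B * quadProd (ω 0) A := by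
  have hCsq : ∀ j, C j * C j = 1 := fun j => by
    rw [hC, mul_assoc, ← mul_assoc (B j), ← (hAB j).eq, mul_assoc (A j), hB, mul_one, hA]
  have hCC' : ∀ j k, Commute (C j) (C k) := fun j k => by
    by_cases h : j = k
    · rw [h]
    · rw [commute_iff_eq, hC, hC, mul_assoc, ← mul_assoc (B j), hAB' k j (Ne.symm h),
        mul_assoc (A k), ← mul_assoc (B k), hAB' j k h]
      simp only [neg_mul, mul_neg, ← mul_assoc, (hAA' j k).eq]
      simp only [mul_assoc, (hBB' j k).eq]
  have h := quadProd_pauli hn ω g hg hsymm u hu hrec (A := fun j => A j ⊗ₜ[ℂ] pauli 0)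
    (B := fun j => B j ⊗ₜ[ℂ] pauli 1) (C := fun j => C j ⊗ₜ[ℂ] pauli 2)
    (fun j => by simp [hA, pauli_mul_self, Algebra.TensorProduct.one_def])
    (fun j => by simp [hB, pauli_mul_self, Algebra.TensorProduct.one_def])
    (fun j => by simp [(hAB j).eq, pauli_one_mul_zero, TensorProduct.tmul_neg])
    (fun j => by
      rw [hC, pauli_two_eq, TensorProduct.tmul_smul, Algebra.TensorProduct.tmul_mul_tmul])
    (fun j k _ => by simp [commute_iff_eq, (hAA' j k).eq])
    (fun j k _ => by simp [commute_iff_eq, (hBB' j k).eq])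
    (fun j k h => by
      simp [commute_iff_eq, hAB' j k h, pauli_one_mul_zero, TensorProduct.tmul_neg,
        TensorProduct.neg_tmul])
  rw [quadProd_tmul _ _ (hg 0) (hsymm 0) hAA' hA (pauli_mul_self 0),
    quadProd_tmul _ _ (hg 1) (hsymm 1) hBB' hB (pauli_mul_self 1),
    quadProd_tmul _ _ (hg 2) (hsymm 2) hCC' hCsq (pauli_mul_self 2), ← map_mul, ← map_mul,
    ← map_mul, ← map_mul] at h
  exact Algebra.TensorProduct.includeLeft_injective (S := ℂ)
    (FaithfulSMul.algebraMap_injective ℂ (Matrix (Fin 2) (Fin 2) ℂ)) h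

end Klein

section RMatrix

/-- The eigenvalue of the R-matrix where `a` of the `2r` elements `Γ_j ⊗ Γ_j` are `1`. -/
def rWeight (r : ℕ) (u : ℂ) (a : ℕ) : ℂ :=
  if Even ((a : ℤ) - r) then
    ∏ m ∈ Finset.range (((a : ℤ) - r).natAbs / 2), (u - (2 * (m : ℂ) + 1)) / (u + (2 * (m : ℂ) + 1))
  else 0

theorem rWeight_symm (r : ℕ) (u : ℂ) (a b : ℕ) (h : a + b = 2 * r) :
    rWeight r u a = rWeight r u b := by
  have : (b : ℤ) - r = -((a : ℤ) - r) := by omega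
  simp only [rWeight, this, Int.natAbs_neg, even_neg]

theorem rWeight_rec {r : ℕ} {u : ℂ} (hu : ∀ m : ℕ, 1 ≤ m → m ≤ r / 2 → u ≠ -(2 * (m : ℂ) - 1))
    (a b : ℕ) (h : a + b + 2 = 2 * r) :
    ((a : ℂ) - b + 2 * u) * rWeight r u (a + 2) + ((a : ℂ) - b - 2 * u) * rWeight r u a = 0 := by
  wlog hab : b ≤ a generalizing a b
  · have := this b a (by omega) (by omega)
    rw [rWeight_symm r u (a + 2) b (by omega), rWeight_symm r u a (b + 2) (by omega)]
    linear_combination -this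
  obtain ⟨q, hq⟩ : ∃ q, a + 1 = r + q := ⟨a + 1 - r, by omega⟩
  rcases Nat.even_or_odd' q with ⟨p, rfl | rfl⟩
  · have h1 : ¬ Even (((a + 2 : ℕ) : ℤ) - r) := by
      rw [Int.even_iff]
      omega
    have h2 : ¬ Even ((a : ℤ) - r) := by
      rw [Int.even_iff]
      omega
    rw [rWeight, rWeight, if_neg h1, if_neg h2]
    ring
  · have h1 : ((a + 2 : ℕ) : ℤ) - r = 2 * (p + 1) := by omega
    have h2 : (a : ℤ) - r = 2 * p := by omega
    have h3 : (a : ℂ) - b = 2 * (2 * p + 1) := by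
      have : (a : ℤ) - b = 2 * (2 * p + 1) := by omega
      exact_mod_cast this
    have h4 : (2 * ((p : ℤ) + 1)).natAbs / 2 = p + 1 := by omega
    have h5 : (2 * (p : ℤ)).natAbs / 2 = p := by omega
    have h6 : u + (2 * (p : ℂ) + 1) ≠ 0 := by
      intro h0
      refine hu (p + 1) (by omega) (by omega) ?_
      push_cast
      linear_combination h0
    simp only [rWeight, h1, h2, h4, h5, even_two_mul, if_true, h3, Finset.prod_range_succ]
    field_simp
    ring

variable {r : ℕ}

theorem Γgen_mul_self (i : Fin (2 * r)) : Γgen r i * Γgen r i = 1 := by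
  have h : Qf r (Pi.single i 1) = 1 := by
    simp [Qf, QuadraticMap.weightedSumSquares_apply, Pi.single_apply]
  rw [Γgen, CliffordAlgebra.ι_sq_scalar, h, map_one]

theorem Γgen_anticomm {i j : Fin (2 * r)} (h : i ≠ j) :
    Γgen r i * Γgen r j = -(Γgen r j * Γgen r i) := by
  have hQ : QuadraticMap.polar (Qf r) (Pi.single i 1) (Pi.single j 1) = 0 := by
    simp [QuadraticMap.polar, Qf, QuadraticMap.weightedSumSquares_apply, Pi.single_apply,
      mul_add, Finset.sum_add_distrib, h, h.symm]
  rw [eq_neg_iff_add_eq_zero, Γgen, Γgen, CliffordAlgebra.ι_mul_ι_add_swap, hQ, map_zero]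

theorem prod_map_Γgen_mul (l : List (Fin (2 * r))) (i : Fin (2 * r)) :
    (l.map (Γgen r)).prod * Γgen r i
      = (-1 : ℂ) ^ (l.length + l.count i) • (Γgen r i * (l.map (Γgen r)).prod) := by
  induction l with
  | nil => simp
  | cons a l ih =>
    rw [List.map_cons, List.prod_cons, mul_assoc, ih, mul_smul_comm, ← mul_assoc, ← mul_assoc]
    by_cases h : a = i
    · subst h
      rw [List.length_cons, List.count_cons_self]
      congr 1
      ring
    · rw [Γgen_anticomm h, List.length_cons, List.count_cons_of_ne h, neg_mul, smul_neg,
        ← neg_smul]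
      congr 1
      ring

theorem Γtop_anticomm (i : Fin (2 * r)) : Γtop r * Γgen r i = -(Γgen r i * Γtop r) := by
  have h := prod_map_Γgen_mul (List.finRange (2 * r)) i
  rw [List.length_finRange, List.count_eq_one_of_mem (List.nodup_finRange _) (List.mem_finRange i),
    pow_add, pow_mul] at h
  rw [Γtop, List.ofFn_eq_map, smul_mul_assoc, h]
  simp

/-- The commuting involutions `Γ_j ⊗ Γ_j`. -/
def ΓΓ (r : ℕ) (j : Fin (2 * r)) : Cl r ⊗[ℂ] Cl r := Γgen r j ⊗ₜ[ℂ] Γgen r j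

theorem ΓΓ_mul_self (j : Fin (2 * r)) : ΓΓ r j * ΓΓ r j = 1 := by
  simp [ΓΓ, Γgen_mul_self, Algebra.TensorProduct.one_def]

theorem commute_ΓΓ (j k : Fin (2 * r)) : Commute (ΓΓ r j) (ΓΓ r k) := by
  by_cases h : j = k
  · rw [h]
  · simp [commute_iff_eq, ΓΓ, Γgen_anticomm h, TensorProduct.tmul_neg, TensorProduct.neg_tmul]

theorem Ik_two (r : ℕ) :
    Ik r 2 = (∑ j, ΓΓ r j) * (∑ j, ΓΓ r j) - (2 * (r : ℂ)) • (1 : Cl r ⊗[ℂ] Cl r) := by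
  have hbr : ∀ i j : Fin (2 * r),
      Γbr r 2 ![i, j] = if i = j then 0 else Γgen r i * Γgen r j := by
    intro i j
    have huniv : (Finset.univ : Finset (Equiv.Perm (Fin 2))) = {1, Equiv.swap 0 1} := by decide
    rw [Γbr, huniv, Finset.sum_pair (by decide)]
    split_ifs with h
    · subst h
      simp [List.ofFn_succ, Γgen_mul_self]
    · simp [List.ofFn_succ, Γgen_anticomm (Ne.symm h), ← two_smul ℂ]
  rw [Ik, ← (finTwoArrowEquiv (Fin (2 * r))).symm.sum_comp, Fintype.sum_prod_type,
    Finset.sum_mul_sum]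
  have hterm : ∀ i j : Fin (2 * r), Γbr r 2 ![i, j] ⊗ₜ[ℂ] Γbr r 2 ![i, j]
      = ΓΓ r i * ΓΓ r j - if i = j then (1 : Cl r ⊗[ℂ] Cl r) else 0 := by
    intro i j
    rw [hbr]
    split_ifs with h
    · subst h
      simp [ΓΓ_mul_self]
    · simp [ΓΓ]
  simp only [finTwoArrowEquiv_symm_apply, hterm, Finset.sum_sub_distrib, Finset.sum_ite_eq,
    Finset.mem_univ, if_true, Finset.sum_const, Finset.card_univ, Fintype.card_fin]
  rw [← Nat.cast_smul_eq_nsmul ℂ]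
  simp

theorem sC_mul_eigen (hr : 2 ≤ r) {s : Finset (Fin (2 * r))} {e : Cl r ⊗[ℂ] Cl r}
    (he : ∀ j, ΓΓ r j * e = (if j ∈ s then (1 : ℂ) else -1) • e) :
    sC r * e = cEv r (r - ((s.card : ℤ) - r).natAbs) • e := by
  have hcard : s.card ≤ 2 * r := by simpa using Finset.card_le_univ s
  have hX : (∑ j, ΓΓ r j) * e = (2 * ((s.card : ℂ) - r)) • e := by
    rw [Finset.sum_mul, Finset.sum_congr rfl fun j _ => he j, ← Finset.sum_smul]
    congr 1
    have h2 : ∀ j, (if j ∈ s then (1 : ℂ) else -1) = 2 * (if j ∈ s then 1 else 0) - 1 := by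
      intro j
      split_ifs <;> norm_num
    simp only [h2, Finset.sum_sub_distrib, ← Finset.mul_sum]
    simp
    ring
  have hr' : (r : ℂ) - 1 ≠ 0 := by
    rw [sub_ne_zero]
    exact_mod_cast (by omega : r ≠ 1)
  rw [sC, Ik_two, smul_mul_assoc, sub_mul, mul_assoc, hX, mul_smul_comm, hX, smul_mul_assoc,
    one_mul, smul_smul, ← sub_smul, smul_smul]
  congr 1
  have hk : ((r - ((s.card : ℤ) - r).natAbs : ℕ) : ℂ)
      * (2 * r - (r - ((s.card : ℤ) - r).natAbs : ℕ))
      = r ^ 2 - ((s.card : ℂ) - r) ^ 2 := by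
    rcases le_total r s.card with h | h
    · rw [show r - ((s.card : ℤ) - r).natAbs = 2 * r - s.card by omega, Nat.cast_sub hcard]
      push_cast
      ring
    · rw [show r - ((s.card : ℤ) - r).natAbs = s.card by omega]
      ring
  have hr2 : 2 * (r : ℂ) - 2 ≠ 0 := by
    rw [show 2 * (r : ℂ) - 2 = 2 * (r - 1) by ring]
    exact mul_ne_zero two_ne_zero hr'
  rw [cEv, mul_assoc (2 : ℂ) _ (_ - _), hk]
  field_simp
  ring

theorem cEv_ne (hr : 2 ≤ r) {k j : ℕ} (hk : k ≤ r) (hj : j ≤ r) (h : k ≠ j) :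
    cEv r k ≠ cEv r j := by
  have hr' : (r : ℂ) - 1 ≠ 0 := by
    rw [sub_ne_zero]
    exact_mod_cast (by omega : r ≠ 1)
  have h1 : (k : ℂ) - j ≠ 0 := by
    rw [sub_ne_zero]
    exact_mod_cast h
  have h2 : 2 * (r : ℂ) - (k + j) ≠ 0 := by
    rw [sub_ne_zero]
    exact_mod_cast (by omega : 2 * r ≠ k + j)
  rw [← sub_ne_zero, show cEv r k - cEv r j
    = 2 * (k - j) * (2 * r - (k + j)) / (16 * ((r : ℂ) - 1)) by rw [cEv, cEv]; ring]
  exact div_ne_zero (mul_ne_zero (mul_ne_zero two_ne_zero h1) h2)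
    (mul_ne_zero (by norm_num) hr')

theorem Pk_mul_eigen (hr : 2 ≤ r) {k κ : ℕ} (hk : k ≤ r) (hκ : κ ≤ r) {e : Cl r ⊗[ℂ] Cl r}
    (he : sC r * e = cEv r κ • e) : Pk r k * e = (if k = κ then (1 : ℂ) else 0) • e := by
  rw [Pk, prod_map_mul_eigen (c := fun j => (cEv r k - cEv r j)⁻¹ * (cEv r κ - cEv r j))]
  · congr 1
    split_ifs with h
    · subst h
      refine List.prod_eq_one fun x hx => ?_
      simp only [List.mem_map, List.mem_filter, List.mem_range, decide_eq_true_eq] at hx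
      obtain ⟨j, ⟨hj, hjk⟩, rfl⟩ := hx
      exact inv_mul_cancel₀ (sub_ne_zero.mpr (cEv_ne hr hk (by omega) (Ne.symm hjk)))
    · rw [List.prod_eq_zero_iff, List.mem_map]
      refine ⟨κ, ?_, by simp⟩
      simpa [Nat.lt_succ_iff] using ⟨hκ, Ne.symm h⟩
  · intro j
    rw [smul_mul_assoc, sub_mul, he, smul_mul_assoc, one_mul, ← sub_smul, smul_smul]

/-- The R-matrix before the chirality projection. -/
def rSum (r : ℕ) (u : ℂ) : Cl r ⊗[ℂ] Cl r :=
  ∑ k ∈ Finset.range (r / 2 + 1),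
    (∏ m ∈ Finset.range k, (u - (2 * (m : ℂ) + 1)) / (u + (2 * (m : ℂ) + 1))) • Pk r (r - 2 * k)

theorem Rmat_eq (r : ℕ) (ε u : ℂ) : Rmat r ε u = ppCh r ε ε * rSum r u := by
  simp [Rmat, rSum, Finset.mul_sum]

theorem rSum_mul_eigen (hr : 2 ≤ r) (u : ℂ) {s : Finset (Fin (2 * r))} {e : Cl r ⊗[ℂ] Cl r}
    (he : ∀ j, ΓΓ r j * e = (if j ∈ s then (1 : ℂ) else -1) • e) :
    rSum r u * e = rWeight r u s.card • e := by
  have hcard : s.card ≤ 2 * r := by simpa using Finset.card_le_univ s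
  rw [rSum, Finset.sum_mul, Finset.sum_congr rfl fun k _ => by
    rw [smul_mul_assoc, Pk_mul_eigen hr (by omega) (by omega) (sC_mul_eigen hr he), smul_smul,
      mul_ite, mul_one, mul_zero], ← Finset.sum_smul]
  congr 1
  rw [rWeight]
  split_ifs with h
  · rw [Int.even_iff] at h
    rw [Finset.sum_eq_single_of_mem (((s.card : ℤ) - r).natAbs / 2)
      (Finset.mem_range.mpr (by omega)), if_pos (by omega)]
    intro k hk hne
    rw [Finset.mem_range] at hk
    exact if_neg (by omega)
  · rw [Int.even_iff] at h
    refine Finset.sum_eq_zero fun k hk => ?_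
    rw [Finset.mem_range] at hk
    exact if_neg (by omega)

theorem rSum_eq_quadProd (hr : 2 ≤ r) (u : ℂ) {ω : Fin (2 * r + 1) → ℂ}
    (hω : ∀ a ≤ 2 * r, ∑ i, ω i * (i : ℂ) ^ a = rWeight r u a) :
    rSum r u = quadProd ω (ΓΓ r) := by
  rw [← sub_eq_zero]
  refine eq_zero_of_forall_eigen commute_ΓΓ ΓΓ_mul_self fun s e he => ?_
  rw [sub_mul, rSum_mul_eigen hr u he, quadProd_mul_eigen ω he,
    hω _ (by simpa using Finset.card_le_univ s), sub_self]

theorem commute_map_pCh {A : Type*} [Ring A] [Algebra ℂ A] (f : Cl r →ₐ[ℂ] A) (ε : ℂ) {y : A}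
    (h : Commute (f (Γtop r)) y) : Commute (f (pCh r ε)) y := by
  rw [pCh, map_smul, map_add, map_one, map_smul]
  exact ((Commute.one_left y).add_left (h.smul_left ε)).smul_left _

/-- A chirality projector in one tensor slot commutes with an R-matrix acting on any two slots. -/
theorem commute_map_pCh_rSum {A : Type*} [Ring A] [Algebra ℂ A] (hr : 2 ≤ r) (f : Cl r →ₐ[ℂ] A)
    (ι : Cl r ⊗[ℂ] Cl r →ₐ[ℂ] A) (ε u : ℂ)
    (h : (∀ j, f (Γtop r) * ι (ΓΓ r j) = -(ι (ΓΓ r j) * f (Γtop r))) ∨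
      ∀ j, f (Γtop r) * ι (ΓΓ r j) = ι (ΓΓ r j) * f (Γtop r)) :
    Commute (f (pCh r ε)) (ι (rSum r u)) := by
  obtain ⟨ω, hω⟩ := exists_quadrature (2 * r) (rWeight r u)
  rw [rSum_eq_quadProd hr u hω, map_quadProd]
  refine commute_map_pCh f ε ?_
  rcases h with h | h
  · exact commute_quadProd_of_anticommute ω (rWeight r u) hω (rWeight_symm r u)
      (fun j k => (commute_ΓΓ j k).map ι) (fun j => by rw [← map_mul, ΓΓ_mul_self, map_one]) h
  · exact commute_quadProd ω h

theorem mul_mul_mul_of_commute {M : Type*} [Monoid M] {p₁ p₂ p₃ g₁ g₂ g₃ : M}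
    (h₁₂ : Commute g₁ p₂) (h₁₃ : Commute g₁ p₃) (h₂₃ : Commute g₂ p₃) :
    p₁ * g₁ * (p₂ * g₂) * (p₃ * g₃) = p₁ * p₂ * p₃ * (g₁ * g₂ * g₃) := by
  calc p₁ * g₁ * (p₂ * g₂) * (p₃ * g₃) = p₁ * (g₁ * p₂) * (g₂ * p₃) * g₃ := by
        simp only [mul_assoc]
    _ = p₁ * p₂ * (g₁ * p₃) * g₂ * g₃ := by
        rw [h₁₂.eq, h₂₃.eq]
        simp only [mul_assoc]
    _ = _ := by
        rw [h₁₃.eq]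
        simp only [mul_assoc]

theorem rSum_yangBaxter (hr : 2 ≤ r)
    (ι12 ι13 ι23 : Cl r ⊗[ℂ] Cl r →ₐ[ℂ] Cl r ⊗[ℂ] (Cl r ⊗[ℂ] Cl r))
    (h12 : ∀ a b : Cl r, ι12 (a ⊗ₜ[ℂ] b) = a ⊗ₜ[ℂ] (b ⊗ₜ[ℂ] (1 : Cl r)))
    (h13 : ∀ a b : Cl r, ι13 (a ⊗ₜ[ℂ] b) = a ⊗ₜ[ℂ] ((1 : Cl r) ⊗ₜ[ℂ] b))
    (h23 : ∀ a b : Cl r, ι23 (a ⊗ₜ[ℂ] b) = (1 : Cl r) ⊗ₜ[ℂ] (a ⊗ₜ[ℂ] b))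
    (u v : ℂ)
    (hu : ∀ m : ℕ, 1 ≤ m → m ≤ r / 2 → u ≠ -(2 * (m : ℂ) - 1))
    (hv : ∀ m : ℕ, 1 ≤ m → m ≤ r / 2 → v ≠ -(2 * (m : ℂ) - 1))
    (huv : ∀ m : ℕ, 1 ≤ m → m ≤ r / 2 → u + v ≠ -(2 * (m : ℂ) - 1)) :
    ι12 (rSum r u) * ι13 (rSum r (u + v)) * ι23 (rSum r v)
      = ι23 (rSum r v) * ι13 (rSum r (u + v)) * ι12 (rSum r u) := by
  have hw : ∀ i, ∀ m : ℕ, 1 ≤ m → m ≤ r / 2 → ![u, u + v, v] i ≠ -(2 * (m : ℂ) - 1) := by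
    intro i
    fin_cases i
    exacts [hu, huv, hv]
  choose ω hω using fun i => exists_quadrature (2 * r) (rWeight r (![u, u + v, v] i))
  rw [rSum_eq_quadProd hr u (hω 0), rSum_eq_quadProd hr (u + v) (hω 1),
    rSum_eq_quadProd hr v (hω 2), map_quadProd, map_quadProd, map_quadProd]
  refine quadProd_yangBaxter (even_two_mul r) ω (fun i => rWeight r (![u, u + v, v] i)) hω
    (fun i => rWeight_symm r _) ![u, u + v, v] rfl (fun i => rWeight_rec (hw i))
    (fun j => by rw [← map_mul, ΓΓ_mul_self, map_one])
    (fun j => by rw [← map_mul, ΓΓ_mul_self, map_one]) (fun j => ?_) (fun j => ?_)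
    (fun j k => (commute_ΓΓ j k).map ι12) (fun j k => (commute_ΓΓ j k).map ι13)
    (fun j k hjk => ?_)
  · simp [commute_iff_eq, ΓΓ, h12, h13]
  · simp [ΓΓ, h12, h13, h23, Γgen_mul_self]
  · simp [ΓΓ, h12, h13, Γgen_anticomm hjk.symm, TensorProduct.neg_tmul]

end RMatrix

/-- `R^{εε}(u)` satisfies the Yang–Baxter equation
`R₁₂(u)R₁₃(u+v)R₂₃(v) = R₂₃(v)R₁₃(u+v)R₁₂(u)`. -/
theorem Rmat_YangBaxter (r : ℕ) (hr : 2 ≤ r) (ε : ℂ) (hε : ε = 1 ∨ ε = -1)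
    (ι12 ι13 ι23 : Cl r ⊗[ℂ] Cl r →ₐ[ℂ] Cl r ⊗[ℂ] (Cl r ⊗[ℂ] Cl r))
    (h12 : ∀ a b : Cl r, ι12 (a ⊗ₜ[ℂ] b) = a ⊗ₜ[ℂ] (b ⊗ₜ[ℂ] (1 : Cl r)))
    (h13 : ∀ a b : Cl r, ι13 (a ⊗ₜ[ℂ] b) = a ⊗ₜ[ℂ] ((1 : Cl r) ⊗ₜ[ℂ] b))
    (h23 : ∀ a b : Cl r, ι23 (a ⊗ₜ[ℂ] b) = (1 : Cl r) ⊗ₜ[ℂ] (a ⊗ₜ[ℂ] b))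
    (u v : ℂ)
    (hu : ∀ m : ℕ, 1 ≤ m → m ≤ r/2 → u ≠ -(2*(m:ℂ) - 1))
    (hv : ∀ m : ℕ, 1 ≤ m → m ≤ r/2 → v ≠ -(2*(m:ℂ) - 1))
    (huv : ∀ m : ℕ, 1 ≤ m → m ≤ r/2 → u + v ≠ -(2*(m:ℂ) - 1)) :
    ι12 (Rmat r ε u) * ι13 (Rmat r ε (u+v)) * ι23 (Rmat r ε v)
      = ι23 (Rmat r ε v) * ι13 (Rmat r ε (u+v)) * ι12 (Rmat r ε u) := by
  let f₁ : Cl r →ₐ[ℂ] Cl r ⊗[ℂ] (Cl r ⊗[ℂ] Cl r) := Algebra.TensorProduct.includeLeft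
  let f₂ : Cl r →ₐ[ℂ] Cl r ⊗[ℂ] (Cl r ⊗[ℂ] Cl r) :=
    Algebra.TensorProduct.includeRight.comp Algebra.TensorProduct.includeLeft
  let f₃ : Cl r →ₐ[ℂ] Cl r ⊗[ℂ] (Cl r ⊗[ℂ] Cl r) :=
    Algebra.TensorProduct.includeRight.comp Algebra.TensorProduct.includeRight
  have e₁ : ∀ a, f₁ a = a ⊗ₜ (1 ⊗ₜ 1) := fun a => rfl
  have e₂ : ∀ a, f₂ a = 1 ⊗ₜ (a ⊗ₜ 1) := fun a => rfl
  have e₃ : ∀ a, f₃ a = 1 ⊗ₜ (1 ⊗ₜ a) := fun a => rfl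
  have c₁₂ : Commute (f₁ (pCh r ε)) (f₂ (pCh r ε)) := by simp [commute_iff_eq, e₁, e₂]
  have c₁₃ : Commute (f₁ (pCh r ε)) (f₃ (pCh r ε)) := by simp [commute_iff_eq, e₁, e₃]
  have c₂₃ : Commute (f₂ (pCh r ε)) (f₃ (pCh r ε)) := by simp [commute_iff_eq, e₂, e₃]
  have p12 : ι12 (ppCh r ε ε) = f₁ (pCh r ε) * f₂ (pCh r ε) := by simp [ppCh, h12, e₁, e₂]
  have p13 : ι13 (ppCh r ε ε) = f₁ (pCh r ε) * f₃ (pCh r ε) := by simp [ppCh, h13, e₁, e₃]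
  have p23 : ι23 (ppCh r ε ε) = f₂ (pCh r ε) * f₃ (pCh r ε) := by simp [ppCh, h23, e₂, e₃]
  have c12 : ∀ w, Commute (f₁ (pCh r ε)) (ι12 (rSum r w)) ∧ Commute (f₂ (pCh r ε)) (ι12 (rSum r w))
      ∧ Commute (f₃ (pCh r ε)) (ι12 (rSum r w)) := fun w =>
    ⟨commute_map_pCh_rSum hr f₁ ι12 ε w (.inl fun j => by
        simp [e₁, ΓΓ, h12, Γtop_anticomm, TensorProduct.neg_tmul]),
      commute_map_pCh_rSum hr f₂ ι12 ε w (.inl fun j => by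
        simp [e₂, ΓΓ, h12, Γtop_anticomm, TensorProduct.neg_tmul, TensorProduct.tmul_neg]),
      commute_map_pCh_rSum hr f₃ ι12 ε w (.inr fun j => by simp [e₃, ΓΓ, h12])⟩
  have c13 : ∀ w, Commute (f₁ (pCh r ε)) (ι13 (rSum r w)) ∧ Commute (f₂ (pCh r ε)) (ι13 (rSum r w))
      ∧ Commute (f₃ (pCh r ε)) (ι13 (rSum r w)) := fun w =>
    ⟨commute_map_pCh_rSum hr f₁ ι13 ε w (.inl fun j => by
        simp [e₁, ΓΓ, h13, Γtop_anticomm, TensorProduct.neg_tmul]),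
      commute_map_pCh_rSum hr f₂ ι13 ε w (.inr fun j => by simp [e₂, ΓΓ, h13]),
      commute_map_pCh_rSum hr f₃ ι13 ε w (.inl fun j => by
        simp [e₃, ΓΓ, h13, Γtop_anticomm, TensorProduct.tmul_neg])⟩
  have c23 : ∀ w, Commute (f₁ (pCh r ε)) (ι23 (rSum r w)) ∧ Commute (f₂ (pCh r ε)) (ι23 (rSum r w))
      ∧ Commute (f₃ (pCh r ε)) (ι23 (rSum r w)) := fun w =>
    ⟨commute_map_pCh_rSum hr f₁ ι23 ε w (.inr fun j => by simp [e₁, ΓΓ, h23]),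
      commute_map_pCh_rSum hr f₂ ι23 ε w (.inl fun j => by
        simp [e₂, ΓΓ, h23, Γtop_anticomm, TensorProduct.neg_tmul, TensorProduct.tmul_neg]),
      commute_map_pCh_rSum hr f₃ ι23 ε w (.inl fun j => by
        simp [e₃, ΓΓ, h23, Γtop_anticomm, TensorProduct.tmul_neg])⟩
  simp only [Rmat_eq, map_mul, p12, p13, p23]
  rw [mul_mul_mul_of_commute ((c12 _).1.mul_left (c12 _).2.2).symm
      ((c12 _).2.1.mul_left (c12 _).2.2).symm ((c13 _).2.1.mul_left (c13 _).2.2).symm,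
    mul_mul_mul_of_commute ((c23 _).1.mul_left (c23 _).2.2).symm
      ((c23 _).1.mul_left (c23 _).2.1).symm ((c13 _).1.mul_left (c13 _).2.1).symm,
    rSum_yangBaxter hr ι12 ι13 ι23 h12 h13 h23 u v hu hv huv]
  congr 1
  have d₁ : Commute (f₁ (pCh r ε) * f₂ (pCh r ε)) (f₁ (pCh r ε) * f₃ (pCh r ε)) :=
    ((Commute.refl _).mul_right c₁₃).mul_left (c₁₂.symm.mul_right c₂₃)
  have d₂ : Commute (f₁ (pCh r ε) * f₂ (pCh r ε) * (f₁ (pCh r ε) * f₃ (pCh r ε)))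
      (f₂ (pCh r ε) * f₃ (pCh r ε)) :=
    ((c₁₂.mul_right c₁₃).mul_left ((Commute.refl _).mul_right c₂₃)).mul_left
      ((c₁₂.mul_right c₁₃).mul_left (c₂₃.symm.mul_right (Commute.refl _)))
  rw [d₂.eq, d₁.eq]
  exact (mul_assoc _ _ _).symm

end
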